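/- Let (R, m, k) be a d-dimensional Cohen-Macaulay local ring and let M be a nonzero finitely generated R-module of depth t. Then Ω^t k belongs to res(M ⊕ Ω^n k) for every integer n ≥ 0. -/

import Mathlib

universe u

open CategoryTheory

namespace ResolvPaper

variable (R : Type u) [CommRing R]

/-- `IsSES f g` means `0 → A → B → C → 0` is a short exact sequence. -/
def IsSES {R : Type u} [CommRing R] {A B C : Type u} [AddCommGroup A] [Module R A]
    [AddCommGroup B] [Module R B] [AddCommGroup C] [Module R C]
    (f : A →ₗ[R] B) (g : B →ₗ[R] C) : Prop :=
  Function.Injective f ∧ Function.Surjective g ∧ LinearMap.range f = LinearMap.ker g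

/-- A resolving subcategory of `mod R`, viewed as a set of bundled modules
closed under isomorphism, containing the finitely generated projective modules, and closed
under direct summands, extensions and syzygies. -/
structure IsResolving (𝒳 : Set (ModuleCat.{u} R)) : Prop where
  fg : ∀ M ∈ 𝒳, Module.Finite R M
  iso_closed : ∀ M N : ModuleCat.{u} R, Nonempty (M ≃ₗ[R] N) → M ∈ 𝒳 → N ∈ 𝒳
  proj_mem : ∀ M : ModuleCat.{u} R, Module.Finite R M → Module.Projective R M → M ∈ 𝒳
  summand_closed : ∀ M N : ModuleCat.{u} R, ModuleCat.of R (↥M × ↥N) ∈ 𝒳 → M ∈ 𝒳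
  ext_closed : ∀ (A B C : ModuleCat.{u} R) (f : A →ₗ[R] B) (g : B →ₗ[R] C),
    IsSES f g → A ∈ 𝒳 → C ∈ 𝒳 → B ∈ 𝒳
  syzygy_closed : ∀ (K P M : ModuleCat.{u} R) (f : K →ₗ[R] P) (g : P →ₗ[R] M),
    IsSES f g → Module.Finite R K → Module.Finite R P → Module.Projective R P →
    M ∈ 𝒳 → K ∈ 𝒳

/-- The resolving closure: the smallest resolving subcategory containing `S`. -/
def resClosure (S : Set (ModuleCat.{u} R)) : Set (ModuleCat.{u} R) :=
  ⋂₀ {𝒳 | IsResolving R 𝒳 ∧ S ⊆ 𝒳}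

/-- An extension-closed subcategory of `mod R`: closed under isomorphism,
direct summands and extensions. -/
def IsExtClosed (𝒳 : Set (ModuleCat.{u} R)) : Prop :=
  (∀ M N : ModuleCat.{u} R, Nonempty (M ≃ₗ[R] N) → M ∈ 𝒳 → N ∈ 𝒳) ∧
  (∀ M N : ModuleCat.{u} R, ModuleCat.of R (↥M × ↥N) ∈ 𝒳 → M ∈ 𝒳) ∧
  (∀ (A B C : ModuleCat.{u} R) (f : A →ₗ[R] B) (g : B →ₗ[R] C),
    IsSES f g → A ∈ 𝒳 → C ∈ 𝒳 → B ∈ 𝒳)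

/-- The extension closure of a set of modules. -/
def extClosure (S : Set (ModuleCat.{u} R)) : Set (ModuleCat.{u} R) :=
  ⋂₀ {𝒳 | IsExtClosed R 𝒳 ∧ S ⊆ 𝒳}

/-- `add R`: direct summands of finite free modules. -/
def addR : Set (ModuleCat.{u} R) :=
  {M | ∃ (n : ℕ) (N : ModuleCat.{u} R), Nonempty ((↥M × ↥N) ≃ₗ[R] (Fin n → R))}

/-- `pdLE n M` : the projective dimension of `M` is at most `n`. -/
def pdLE : ℕ → ModuleCat.{u} R → Prop
  | 0, M => Module.Projective R M
  | n+1, M => ∃ (K P : ModuleCat.{u} R) (f : K →ₗ[R] P) (g : P →ₗ[R] M),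
      Module.Finite R P ∧ Module.Projective R P ∧ IsSES f g ∧ pdLE n K

/-- The projective dimension, an element of `WithBot ℕ∞`; the zero module
has projective dimension `⊥ = -∞`. -/
noncomputable def pdim (M : ModuleCat.{u} R) : WithBot ℕ∞ :=
  sInf {x : WithBot ℕ∞ | (x = ⊥ ∧ Subsingleton M) ∨ ∃ n : ℕ, x = (n : ℕ∞) ∧ pdLE R n M}

/-- The depth of `M` with respect to the ideal `I`: the supremum of lengths of weakly
`M`-regular sequences contained in `I`.  The zero module has depth `∞`. -/
noncomputable def depthE (I : Ideal R) (M : Type u) [AddCommGroup M] [Module R M] : ℕ∞ :=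
  sSup {x : ℕ∞ | ∃ rs : List R, (∀ r ∈ rs, r ∈ I) ∧
    RingTheory.Sequence.IsWeaklyRegular M rs ∧ x = rs.length}

/-- The grade of an ideal: the length of a maximal `R`-regular sequence in `I`. -/
noncomputable def gradeE (I : Ideal R) : ℕ∞ := depthE R I R

/-- A grade consistent function on `Spec R`. -/
def GradeConsistent (f : PrimeSpectrum R → ℕ) : Prop :=
  (∀ p : PrimeSpectrum R, (f p : ℕ∞) ≤ gradeE R p.asIdeal) ∧
  (∀ p q : PrimeSpectrum R, p.asIdeal ≤ q.asIdeal → f p ≤ f q)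

/-- The localization of a module at a prime, as a module over the local ring `R_p`. -/
noncomputable abbrev localizeM (p : PrimeSpectrum R) (M : ModuleCat.{u} R) :
    ModuleCat.{u} (Localization.AtPrime p.asIdeal) :=
  ModuleCat.of (Localization.AtPrime p.asIdeal) (LocalizedModule p.asIdeal.primeCompl M)

/-- `pd_{R_p} M_p`. -/
noncomputable def localPdim (p : PrimeSpectrum R) (M : ModuleCat.{u} R) : WithBot ℕ∞ :=
  pdim (Localization.AtPrime p.asIdeal) (localizeM R p M)

/-- `depth_{R_p} M_p`. -/
noncomputable def localDepth (p : PrimeSpectrum R) (M : ModuleCat.{u} R) : ℕ∞ :=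
  depthE (Localization.AtPrime p.asIdeal)
    (IsLocalRing.maximalIdeal (Localization.AtPrime p.asIdeal))
    (LocalizedModule p.asIdeal.primeCompl M)

/-- The height of a prime ideal. -/
noncomputable def heightE (p : PrimeSpectrum R) : ℕ∞ := Order.height p

/-- `PD(R)` : finitely generated modules of finite projective dimension. -/
def PDcat : Set (ModuleCat.{u} R) :=
  {M | Module.Finite R M ∧ ∃ n : ℕ, pdLE R n M}

/-- `MCM(R)` : maximal Cohen-Macaulay modules. -/
def MCMcat : Set (ModuleCat.{u} R) :=
  {M | Module.Finite R M ∧ ∀ p : PrimeSpectrum R, heightE R p ≤ localDepth R p M}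

/-- The nonfree locus of a module. -/
def NF (M : ModuleCat.{u} R) : Set (PrimeSpectrum R) :=
  {p | ¬ Module.Free (Localization.AtPrime p.asIdeal) (LocalizedModule p.asIdeal.primeCompl M)}

/-- The infinite projective dimension locus of a module. -/
def IPD (M : ModuleCat.{u} R) : Set (PrimeSpectrum R) :=
  {p | localPdim R p M = (⊤ : WithBot ℕ∞)}

/-- The infinite projective dimension locus of a collection of modules. -/
def IPDcat (𝒳 : Set (ModuleCat.{u} R)) : Set (PrimeSpectrum R) :=
  ⋃ M ∈ 𝒳, IPD R M

/-- The modules in `mod R` whose infinite projective dimension locus lies in `W`. -/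
def IPDinv (W : Set (PrimeSpectrum R)) : Set (ModuleCat.{u} R) :=
  {M | Module.Finite R M ∧ IPD R M ⊆ W}

/-- A specialization closed subset of `Spec R`. -/
def SpecClosed (W : Set (PrimeSpectrum R)) : Prop :=
  ∀ p ∈ W, ∀ q : PrimeSpectrum R, p.asIdeal ≤ q.asIdeal → q ∈ W

/-- Membership in `add 𝒳_p`: direct summands of localizations of finite direct sums
of members of `𝒳`. -/
def memAddLocal (𝒳 : Set (ModuleCat.{u} R)) (p : PrimeSpectrum R)
    (N : ModuleCat.{u} (Localization.AtPrime p.asIdeal)) : Prop :=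
  ∃ (n : ℕ) (X : Fin n → ModuleCat.{u} R), (∀ i, X i ∈ 𝒳) ∧
    ∃ (N' : ModuleCat.{u} (Localization.AtPrime p.asIdeal)),
      Nonempty ((↥N × ↥N') ≃ₗ[Localization.AtPrime p.asIdeal]
        ((i : Fin n) → LocalizedModule p.asIdeal.primeCompl (X i)))

/-- `K` is an `n`-th syzygy of `M` computed from a minimal free resolution over the
local ring `S`. -/
def IsMinSyz (S : Type u) [CommRing S] [IsLocalRing S] :
    ℕ → ModuleCat.{u} S → ModuleCat.{u} S → Prop
  | 0, M, K => Nonempty (K ≃ₗ[S] M)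
  | n+1, M, K => ∃ (F : ModuleCat.{u} S) (g : F →ₗ[S] M) (K' : ModuleCat.{u} S)
      (i : K' →ₗ[S] F),
      Module.Finite S F ∧ Module.Free S F ∧ Function.Surjective g ∧
      (LinearMap.ker g ≤ (IsLocalRing.maximalIdeal S) • (⊤ : Submodule S F)) ∧
      Function.Injective i ∧ LinearMap.range i = LinearMap.ker g ∧
      IsMinSyz S n K' K

/-- `K` is an `n`-th syzygy of `M` in some projective resolution (over any ring). -/
def IsSyz : ℕ → ModuleCat.{u} R → ModuleCat.{u} R → Prop
  | 0, M, K => Nonempty (K ≃ₗ[R] M)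
  | n+1, M, K => ∃ (F : ModuleCat.{u} R) (g : F →ₗ[R] M) (K' : ModuleCat.{u} R)
      (i : K' →ₗ[R] F),
      Module.Finite R F ∧ Module.Projective R F ∧ Function.Surjective g ∧
      Function.Injective i ∧ LinearMap.range i = LinearMap.ker g ∧
      IsSyz n K' K

/-- `T` is (isomorphic to) the Auslander transpose of `M`, computed from a minimal
free presentation over the local ring `S`. -/
def IsTranspose (S : Type u) [CommRing S] [IsLocalRing S] (M T : ModuleCat.{u} S) : Prop :=
  ∃ (F1 F0 : ModuleCat.{u} S) (d : F1 →ₗ[S] F0) (e : F0 →ₗ[S] M),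
    Module.Finite S F0 ∧ Module.Free S F0 ∧ Module.Finite S F1 ∧ Module.Free S F1 ∧
    Function.Surjective e ∧ LinearMap.range d = LinearMap.ker e ∧
    LinearMap.ker e ≤ (IsLocalRing.maximalIdeal S) • (⊤ : Submodule S F0) ∧
    LinearMap.ker d ≤ (IsLocalRing.maximalIdeal S) • (⊤ : Submodule S F1) ∧
    Nonempty (T ≃ₗ[S] ((Module.Dual S F1) ⧸ LinearMap.range d.dualMap))

/-- `T` is (isomorphic to) `Tr Ω^n M` over the local ring `S`. -/
def IsTrOmega (S : Type u) [CommRing S] [IsLocalRing S] (n : ℕ) (M T : ModuleCat.{u} S) :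
    Prop :=
  ∃ K : ModuleCat.{u} S, IsMinSyz S n M K ∧ IsTranspose S K T

/-- Resolving subcategory `𝒳` is dominant on `W ⊆ Spec R`. -/
def DominantOn (𝒳 : Set (ModuleCat.{u} R)) (W : Set (PrimeSpectrum R)) : Prop :=
  ∀ p ∈ W, ∃ (n : ℕ) (K : ModuleCat.{u} (Localization.AtPrime p.asIdeal)),
    IsMinSyz (Localization.AtPrime p.asIdeal) n
      (ModuleCat.of (Localization.AtPrime p.asIdeal)
        (IsLocalRing.ResidueField (Localization.AtPrime p.asIdeal))) K ∧
    memAddLocal R 𝒳 p K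

/-- Dominant resolving subcategory. -/
def Dominant (𝒳 : Set (ModuleCat.{u} R)) : Prop := DominantOn R 𝒳 Set.univ

/-- A (noetherian) local ring is Cohen-Macaulay if its depth equals its Krull dimension. -/
def IsCMLocalRing (S : Type u) [CommRing S] [IsLocalRing S] : Prop :=
  IsNoetherianRing S ∧
    ((depthE S (IsLocalRing.maximalIdeal S) S : WithBot ℕ∞) = ringKrullDim S)

/-- A regular local ring: a noetherian local ring whose maximal ideal is generated by
`dim S` elements. -/
def IsRegLocalRing (S : Type u) [CommRing S] [IsLocalRing S] : Prop :=
  IsNoetherianRing S ∧ ∃ s : Finset S,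
    Ideal.span (s : Set S) = IsLocalRing.maximalIdeal S ∧
    ringKrullDim S = (s.card : WithBot ℕ∞)

/-- The singular locus of `R`. -/
def SingLocus : Set (PrimeSpectrum R) :=
  {p | ¬ IsRegLocalRing (Localization.AtPrime p.asIdeal)}

/-- A hypersurface local ring: the completion is a quotient of a regular local ring by
one element. -/
def IsHypersurfaceLocalRing (S : Type u) [CommRing S] [IsLocalRing S] : Prop :=
  ∃ (T : Type u) (_ : CommRing T) (_ : IsLocalRing T) (f : T),
    IsRegLocalRing T ∧
    Nonempty ((AdicCompletion (IsLocalRing.maximalIdeal S) S) ≃+* (T ⧸ Ideal.span {f}))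

/-- A complete intersection local ring: the completion is a quotient of a regular local
ring by a regular sequence. -/
def IsCompleteIntersectionLocalRing (S : Type u) [CommRing S] [IsLocalRing S] : Prop :=
  ∃ (T : Type u) (_ : CommRing T) (_ : IsLocalRing T) (rs : List T),
    IsRegLocalRing T ∧ RingTheory.Sequence.IsRegular T rs ∧
    Nonempty ((AdicCompletion (IsLocalRing.maximalIdeal S) S) ≃+*
      (T ⧸ Ideal.ofList rs))

/-- The subquotient `A / (A ⊓ B)` of two submodules, used for homology. -/
def subquot {S M : Type u} [CommRing S] [AddCommGroup M] [Module S M]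
    (A B : Submodule S M) : Type u :=
  A ⧸ (B.comap A.subtype)

noncomputable instance {S M : Type u} [CommRing S] [AddCommGroup M] [Module S M]
    (A B : Submodule S M) : AddCommGroup (subquot A B) :=
  inferInstanceAs (AddCommGroup (A ⧸ (B.comap A.subtype)))

noncomputable instance {S M : Type u} [CommRing S] [AddCommGroup M] [Module S M]
    (A B : Submodule S M) : Module S (subquot A B) :=
  inferInstanceAs (Module S (A ⧸ (B.comap A.subtype)))

/-- `E` is (isomorphic to) `Ext^{j+1}_S(M, S)`, computed from a finite free resolution. -/
def IsExtPos (S : Type u) [CommRing S] (j : ℕ) (M E : ModuleCat.{u} S) : Prop :=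
  ∃ (F : ℕ → ModuleCat.{u} S) (d : ∀ i : ℕ, (F (i+1) : Type u) →ₗ[S] F i)
    (e : (F 0 : Type u) →ₗ[S] M),
    (∀ i, Module.Finite S (F i)) ∧ (∀ i, Module.Free S (F i)) ∧
    Function.Surjective e ∧ LinearMap.range (d 0) = LinearMap.ker e ∧
    (∀ i, LinearMap.range (d (i+1)) = LinearMap.ker (d i)) ∧
    Nonempty (E ≃ₗ[S]
      subquot (LinearMap.ker ((d (j+1)).dualMap)) (LinearMap.range ((d j).dualMap)))

/-- `T` is (isomorphic to) `Tor_n^S(M, N)`, computed from a projective resolution of `M`. -/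
def IsTor (S : Type u) [CommRing S] (n : ℕ) (M N T : ModuleCat.{u} S) : Prop :=
  ∃ (F : ℕ → ModuleCat.{u} S) (d : ∀ i : ℕ, (F (i+1) : Type u) →ₗ[S] F i)
    (e : (F 0 : Type u) →ₗ[S] M),
    (∀ i, Module.Projective S (F i)) ∧
    Function.Surjective e ∧ LinearMap.range (d 0) = LinearMap.ker e ∧
    (∀ i, LinearMap.range (d (i+1)) = LinearMap.ker (d i)) ∧
    (match n with
      | 0 => Nonempty (T ≃ₗ[S] TensorProduct S M N)
      | (j+1) => Nonempty (T ≃ₗ[S]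
          subquot (LinearMap.ker (LinearMap.rTensor (↥N) (d j)))
            (LinearMap.range (LinearMap.rTensor (↥N) (d (j+1))))))

/-- `idLE n M` : the injective dimension of `M` is at most `n`. -/
def idLE (S : Type u) [CommRing S] : ℕ → ModuleCat.{u} S → Prop
  | 0, M => Module.Injective S M
  | n+1, M => ∃ (I C : ModuleCat.{u} S) (f : M →ₗ[S] I) (g : I →ₗ[S] C),
      IsSES f g ∧ Module.Injective S I ∧ idLE S n C

/-- `PD_0^n(R)` over a local ring: modules of projective dimension at most `n` that are
free on the punctured spectrum. -/
def PD0n [IsLocalRing R] (n : ℕ) : Set (ModuleCat.{u} R) :=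
  {M | Module.Finite R M ∧ pdLE R n M ∧
    ∀ p : PrimeSpectrum R, p.asIdeal ≠ IsLocalRing.maximalIdeal R →
      Module.Free (Localization.AtPrime p.asIdeal) (LocalizedModule p.asIdeal.primeCompl M)}

/-- `PD_0(R)` over a local ring: modules of finite projective dimension that are
free on the punctured spectrum. -/
def PD0 [IsLocalRing R] : Set (ModuleCat.{u} R) :=
  {M | Module.Finite R M ∧ (∃ n : ℕ, pdLE R n M) ∧
    ∀ p : PrimeSpectrum R, p.asIdeal ≠ IsLocalRing.maximalIdeal R →
      Module.Free (Localization.AtPrime p.asIdeal) (LocalizedModule p.asIdeal.primeCompl M)}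

/-- The residue field of a local ring, as a bundled module. -/
noncomputable abbrev residueMod (S : Type u) [CommRing S] [IsLocalRing S] : ModuleCat.{u} S :=
  ModuleCat.of S (IsLocalRing.ResidueField S)


/-!
Let `X` be a resolving subcategory containing `M` and `Ω^n k`, where `k = R ⧸ 𝔪`. The subcategories
`cosyzygies^[j] X` are resolving and increase with `j`, and `Ω^j k ∈ X` if and only if
`k ∈ cosyzygies^[j] X`. For a maximal weakly `M`-regular sequence `rs` in `𝔪`, of length `s`, the
module `N = M ⧸ rs M` lies in `Y = cosyzygies^[s] X` and has a nonzero socle. As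
`k ∈ cosyzygies^[n] Y`, it is enough to show that `k ∈ cosyzygies Y` implies `k ∈ Y`.

The Koszul complex of generators of `𝔪` with coefficients in `N` has its terms in `Y`, and its
homology is killed by `𝔪`, hence is a finite direct sum of copies of `k` and lies in
`cosyzygies Y`. Therefore boundaries lie in `Y` as soon as the cycles containing them do, and by
descending induction on the degree all cycles lie in `Y`. In the lowest degree the cycles form the
socle of `N`, a nonzero direct sum of copies of `k`, so `k ∈ Y`.
-/

section ResolvingClosure

variable {R}

section ShortExact

variable {A B C P Q : Type u} [AddCommGroup A] [Module R A] [AddCommGroup B] [Module R B]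
  [AddCommGroup C] [Module R C] [AddCommGroup P] [Module R P] [AddCommGroup Q] [Module R Q]

theorem isSES_subtype_ker {g : B →ₗ[R] C} (hg : Function.Surjective g) :
    IsSES (LinearMap.ker g).subtype g :=
  ⟨Subtype.val_injective, hg, Submodule.range_subtype _⟩

theorem isSES_inl_snd : IsSES (LinearMap.inl R A B) (LinearMap.snd R A B) :=
  ⟨LinearMap.inl_injective, LinearMap.snd_surjective, LinearMap.range_inl R A B⟩

theorem isSES_ker_comp {p : P →ₗ[R] B} (hp : Function.Surjective p) (g : B →ₗ[R] C) :
    IsSES (Submodule.inclusion (LinearMap.ker_le_ker_comp p g))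
      (p.restrict (q := LinearMap.ker g) fun _ hx => LinearMap.mem_ker.2 (LinearMap.mem_ker.1 hx) :
        LinearMap.ker (g ∘ₗ p) →ₗ[R] _) := by
  refine ⟨Submodule.inclusion_injective _, ?_, ?_⟩
  · rintro ⟨b, hb⟩
    obtain ⟨x, rfl⟩ := hp b
    exact ⟨⟨x, hb⟩, rfl⟩
  · rw [Submodule.range_inclusion, LinearMap.ker_restrict]

namespace IsSES

variable {f : A →ₗ[R] B} {g : B →ₗ[R] C}

theorem comp_eq_zero (h : IsSES f g) : g ∘ₗ f = 0 :=
  LinearMap.range_le_ker_iff.1 h.2.2.le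

theorem nonempty_equiv_ker (h : IsSES f g) : Nonempty (A ≃ₗ[R] LinearMap.ker g) :=
  ⟨(LinearEquiv.ofInjective f h.1).trans (LinearEquiv.ofEq _ _ h.2.2)⟩

theorem surjective_coprod (h : IsSES f g) {s : P →ₗ[R] B} (hs : Function.Surjective (g ∘ₗ s)) :
    Function.Surjective (f.coprod s) := by
  intro b
  obtain ⟨x, hx⟩ := hs (g b)
  obtain ⟨a, ha⟩ : b - s x ∈ LinearMap.range f := by
    rw [h.2.2, LinearMap.mem_ker, map_sub, sub_eq_zero]
    exact hx.symm
  exact ⟨(a, x), by rw [LinearMap.coprod_apply, ha, sub_add_cancel]⟩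

theorem nonempty_ker_coprod_equiv (h : IsSES f g) (s : P →ₗ[R] B) :
    Nonempty (LinearMap.ker (f.coprod s) ≃ₗ[R] LinearMap.ker (g ∘ₗ s)) := by
  have hgf (a : A) : g (f a) = 0 := LinearMap.congr_fun h.comp_eq_zero a
  have hsnd (z : A × P) (hz : z ∈ LinearMap.ker (f.coprod s)) : z.2 ∈ LinearMap.ker (g ∘ₗ s) := by
    simpa [hgf] using congrArg g (LinearMap.mem_ker.1 hz)
  refine ⟨LinearEquiv.ofBijective ((LinearMap.snd R A P).restrict hsnd) ⟨?_, ?_⟩⟩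
  · rw [← LinearMap.ker_eq_bot, LinearMap.ker_eq_bot']
    rintro ⟨⟨a, x⟩, hz⟩ hx
    obtain rfl : x = 0 := congrArg Subtype.val hx
    obtain rfl : a = 0 := h.1 (by simpa using hz)
    rfl
  · rintro ⟨x, hx⟩
    obtain ⟨a, ha⟩ : s x ∈ LinearMap.range f := h.2.2 ▸ hx
    exact ⟨⟨(-a, x), by simp [ha]⟩, rfl⟩

end IsSES

theorem nonempty_ker_prodMap_equiv (p : P →ₗ[R] A) (q : Q →ₗ[R] B) :
    Nonempty (LinearMap.ker (p.prodMap q) ≃ₗ[R] LinearMap.ker p × LinearMap.ker q) :=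
  ⟨{ toFun := fun x => (⟨x.1.1, congrArg Prod.fst x.2⟩, ⟨x.1.2, congrArg Prod.snd x.2⟩)
     invFun := fun x => ⟨(x.1, x.2), Prod.ext x.1.2 x.2.2⟩
     map_add' := fun _ _ => rfl
     map_smul' := fun _ _ => rfl }⟩

end ShortExact

/-- The modules having a first syzygy in `X`. For a resolving `X` over a noetherian ring, the
iterate `cosyzygies^[n] X` is the category of modules with `X`-resolution dimension at most `n`. -/
def cosyzygies (X : Set (ModuleCat.{u} R)) : Set (ModuleCat.{u} R) :=
  {A | ∃ (P : ModuleCat.{u} R) (p : P →ₗ[R] A), Module.Finite R P ∧ Module.Projective R P ∧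
    Function.Surjective p ∧ ModuleCat.of R (LinearMap.ker p) ∈ X}

theorem finite_of_mem_cosyzygies {X : Set (ModuleCat.{u} R)} {A : ModuleCat.{u} R}
    (hA : A ∈ cosyzygies X) : Module.Finite R A :=
  let ⟨_, p, _, _, hp, _⟩ := hA
  Module.Finite.of_surjective p hp

namespace IsResolving

variable {X : Set (ModuleCat.{u} R)} {A B C P : Type u} [AddCommGroup A] [Module R A]
  [AddCommGroup B] [Module R B] [AddCommGroup C] [Module R C] [AddCommGroup P] [Module R P]

theorem mem_of_equiv (hX : IsResolving R X) (e : A ≃ₗ[R] B) (hA : ModuleCat.of R A ∈ X) :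
    ModuleCat.of R B ∈ X :=
  hX.iso_closed (ModuleCat.of R A) (ModuleCat.of R B) ⟨e⟩ hA

theorem mem_of_projective (hX : IsResolving R X) (P : Type u) [AddCommGroup P] [Module R P]
    [Module.Finite R P] [Module.Projective R P] : ModuleCat.of R P ∈ X :=
  hX.proj_mem (ModuleCat.of R P) ‹_› ‹_›

theorem mem_of_isZero (hX : IsResolving R X) {A : ModuleCat.{u} R} (hA : Limits.IsZero A) :
    A ∈ X :=
  have := ModuleCat.subsingleton_of_isZero hA
  hX.mem_of_projective A

theorem mem_of_extension (hX : IsResolving R X) {f : A →ₗ[R] B} {g : B →ₗ[R] C}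
    (h : IsSES f g) (hA : ModuleCat.of R A ∈ X) (hC : ModuleCat.of R C ∈ X) :
    ModuleCat.of R B ∈ X :=
  hX.ext_closed (ModuleCat.of R A) (ModuleCat.of R B) (ModuleCat.of R C) f g h hA hC

theorem mem_of_prod_left (hX : IsResolving R X) (h : ModuleCat.of R (A × B) ∈ X) :
    ModuleCat.of R A ∈ X :=
  hX.summand_closed (ModuleCat.of R A) (ModuleCat.of R B) h

theorem mem_of_prod_right (hX : IsResolving R X) (h : ModuleCat.of R (A × B) ∈ X) :
    ModuleCat.of R B ∈ X :=
  hX.mem_of_prod_left (hX.mem_of_equiv (LinearEquiv.prodComm R A B) h)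

theorem prod_mem (hX : IsResolving R X) (hA : ModuleCat.of R A ∈ X)
    (hB : ModuleCat.of R B ∈ X) : ModuleCat.of R (A × B) ∈ X :=
  hX.mem_of_extension isSES_inl_snd hA hB

theorem fun_mem (hX : IsResolving R X) (hA : ModuleCat.of R A ∈ X) (n : ℕ) :
    ModuleCat.of R (Fin n → A) ∈ X := by
  induction n with
  | zero => exact hX.mem_of_projective _
  | succ n ih => exact hX.mem_of_equiv (Fin.consLinearEquiv R fun _ => A) (hX.prod_mem hA ih)

theorem mem_of_isSES_of_mem_cosyzygies (hX : IsResolving R X) {f : A →ₗ[R] B} {g : B →ₗ[R] C}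
    (h : IsSES f g) (hB : ModuleCat.of R B ∈ X) (hC : ModuleCat.of R C ∈ cosyzygies X) :
    ModuleCat.of R A ∈ X := by
  obtain ⟨P, p, _, _, hp, hker⟩ := hC
  -- As `p` lifts along `g`, the pullback of the two is `A × P`; it also extends `B` by `ker p`.
  obtain ⟨s, rfl⟩ : ∃ s, g ∘ₗ s = p := Module.projective_lifting_property g p h.2.1
  obtain ⟨e⟩ := h.nonempty_ker_coprod_equiv s
  have hAP : ModuleCat.of R (A × P) ∈ X :=
    hX.mem_of_extension (isSES_subtype_ker (h.surjective_coprod hp))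
      (hX.mem_of_equiv e.symm hker) hB
  exact hX.mem_of_prod_left hAP

theorem mem_cosyzygies_of_isSES (hX : IsResolving R X) {f : A →ₗ[R] B} {g : B →ₗ[R] C}
    (h : IsSES f g) (hA : ModuleCat.of R A ∈ X) (hB : ModuleCat.of R B ∈ cosyzygies X) :
    ModuleCat.of R C ∈ cosyzygies X := by
  obtain ⟨P, p, hPfin, hPproj, hp, hker⟩ := hB
  obtain ⟨e⟩ := h.nonempty_equiv_ker
  exact ⟨P, g ∘ₗ p, hPfin, hPproj, h.2.1.comp hp,
    hX.mem_of_extension (isSES_ker_comp hp g) hker (hX.mem_of_equiv e hA)⟩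

theorem mem_cosyzygies_iff_of_isSES (hX : IsResolving R X) [Module.Finite R P]
    [Module.Projective R P] {f : A →ₗ[R] P} {g : P →ₗ[R] C} (h : IsSES f g) :
    ModuleCat.of R C ∈ cosyzygies X ↔ ModuleCat.of R A ∈ X := by
  refine ⟨hX.mem_of_isSES_of_mem_cosyzygies h (hX.mem_of_projective P), fun hA => ?_⟩
  obtain ⟨e⟩ := h.nonempty_equiv_ker
  exact ⟨ModuleCat.of R P, g, ‹_›, ‹_›, h.2.1, hX.mem_of_equiv e hA⟩

theorem prod_mem_cosyzygies (hX : IsResolving R X) (hA : ModuleCat.of R A ∈ cosyzygies X)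
    (hB : ModuleCat.of R B ∈ cosyzygies X) : ModuleCat.of R (A × B) ∈ cosyzygies X := by
  obtain ⟨P, p, _, _, hp, hkerp⟩ := hA
  obtain ⟨Q, q, _, _, hq, hkerq⟩ := hB
  obtain ⟨e⟩ := nonempty_ker_prodMap_equiv (p : P →ₗ[R] A) (q : Q →ₗ[R] B)
  exact ⟨ModuleCat.of R (P × Q), p.prodMap q, inferInstance, inferInstance, hp.prodMap hq,
    hX.mem_of_equiv e.symm (hX.prod_mem hkerp hkerq)⟩

theorem mem_cosyzygies_of_prod_left (hX : IsResolving R X)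
    (h : ModuleCat.of R (A × B) ∈ cosyzygies X) : ModuleCat.of R A ∈ cosyzygies X := by
  have : Module.Finite R (A × B) := finite_of_mem_cosyzygies h
  have : Module.Finite R A := .of_surjective _ (LinearMap.fst_surjective (R := R) (M₂ := B))
  have : Module.Finite R B := .of_surjective _ (LinearMap.snd_surjective (R := R) (M := A))
  obtain ⟨m, p, hp⟩ := Module.Finite.exists_fin' R A
  obtain ⟨n, q, hq⟩ := Module.Finite.exists_fin' R B
  obtain ⟨e⟩ := nonempty_ker_prodMap_equiv p q
  have hker : ModuleCat.of R (LinearMap.ker (p.prodMap q)) ∈ X :=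
    (hX.mem_cosyzygies_iff_of_isSES (isSES_subtype_ker (hp.prodMap hq))).1 h
  exact (hX.mem_cosyzygies_iff_of_isSES (isSES_subtype_ker hp)).2
    (hX.mem_of_prod_left (hX.mem_of_equiv e hker))

section Noetherian

variable [IsNoetherianRing R]

theorem subset_cosyzygies (hX : IsResolving R X) : X ⊆ cosyzygies X := by
  intro A hA
  have := hX.fg A hA
  obtain ⟨n, g, hg⟩ := Module.Finite.exists_fin' R A
  refine ⟨ModuleCat.of R (Fin n → R), g, inferInstance, inferInstance, hg, ?_⟩
  exact hX.syzygy_closed _ (ModuleCat.of R (Fin n → R)) A _ g (isSES_subtype_ker hg)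
    inferInstance inferInstance inferInstance hA

theorem mem_cosyzygies_of_extension (hX : IsResolving R X) {f : A →ₗ[R] B} {g : B →ₗ[R] C}
    (h : IsSES f g) (hA : ModuleCat.of R A ∈ cosyzygies X)
    (hC : ModuleCat.of R C ∈ cosyzygies X) : ModuleCat.of R B ∈ cosyzygies X := by
  obtain ⟨P, p, _, _, hp, hker⟩ := hC
  obtain ⟨s, rfl⟩ : ∃ s, g ∘ₗ s = p := Module.projective_lifting_property g p h.2.1
  obtain ⟨e⟩ := h.nonempty_ker_coprod_equiv s
  exact hX.mem_cosyzygies_of_isSES (isSES_subtype_ker (h.surjective_coprod hp))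
    (hX.mem_of_equiv e.symm hker)
    (hX.prod_mem_cosyzygies hA (hX.subset_cosyzygies (hX.mem_of_projective P)))

protected theorem cosyzygies (hX : IsResolving R X) : IsResolving R (cosyzygies X) where
  fg _ hA := finite_of_mem_cosyzygies hA
  iso_closed := by
    rintro A B ⟨e⟩ ⟨P, p, hPfin, hPproj, hp, hker⟩
    exact ⟨P, e.toLinearMap ∘ₗ p, hPfin, hPproj, e.surjective.comp hp, by
      rwa [LinearEquiv.ker_comp]⟩
  proj_mem A hfin hproj := hX.subset_cosyzygies (hX.proj_mem A hfin hproj)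
  summand_closed _ _ h := hX.mem_cosyzygies_of_prod_left h
  ext_closed _ _ _ _ _ h hA hC := hX.mem_cosyzygies_of_extension h hA hC
  syzygy_closed _ _ _ _ _ h _ _ _ hM :=
    hX.subset_cosyzygies ((hX.mem_cosyzygies_iff_of_isSES h).1 hM)

theorem cosyzygies_iterate (hX : IsResolving R X) (n : ℕ) :
    IsResolving R (cosyzygies^[n] X) := by
  induction n with
  | zero => exact hX
  | succ n ih => rw [Function.iterate_succ_apply']; exact ih.cosyzygies

theorem monotone_cosyzygies_iterate (hX : IsResolving R X) :
    Monotone fun n => cosyzygies^[n] X :=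
  monotone_nat_of_le_succ fun n => by
    rw [Function.iterate_succ_apply']
    exact (hX.cosyzygies_iterate n).subset_cosyzygies

theorem mem_cosyzygies_iterate_iff_of_isSyz (hX : IsResolving R X) {n : ℕ}
    {M K : ModuleCat.{u} R} (h : IsSyz R n M K) : M ∈ cosyzygies^[n] X ↔ K ∈ X := by
  induction n generalizing M with
  | zero =>
    obtain ⟨e⟩ := h
    exact ⟨hX.iso_closed M K ⟨e.symm⟩, hX.iso_closed K M ⟨e⟩⟩
  | succ n ih =>
    obtain ⟨F, g, K', i, _, _, hg, hi, hexact, hK'⟩ := h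
    rw [Function.iterate_succ_apply', ← ih hK']
    exact (hX.cosyzygies_iterate n).mem_cosyzygies_iff_of_isSES ⟨hi, hg, hexact⟩

end Noetherian

end IsResolving

end ResolvingClosure

section Koszul

universe v

open CochainComplex HomComplex Limits

variable {R}

section LinearCategory

variable {𝒞 : Type*} [Category* 𝒞] [Preadditive 𝒞] [Linear R 𝒞] [HasBinaryBiproducts 𝒞]

/-- The Koszul complex of a sequence of scalars with coefficients in a cochain complex, as an
iterated mapping cone of homotheties. Coefficients in degree `0` give terms in the degrees from
`-rs.length` to `0`, the lowest of which is a copy of the coefficients. -/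
noncomputable def koszul (K : CochainComplex 𝒞 ℤ) : List R → CochainComplex 𝒞 ℤ
  | [] => K
  | r :: rs => mappingCone (r • 𝟙 (koszul K rs))

theorem isZero_koszul_X {K : CochainComplex 𝒞 ℤ} (rs : List R) {i : ℤ}
    (hK : ∀ j ≤ rs.length, IsZero (K.X (i + j))) : IsZero ((koszul K rs).X i) := by
  induction rs generalizing i with
  | nil => simpa [koszul] using hK 0
  | cons r rs ih =>
    refine (mappingCone.isZero_X_iff _ i).2 ⟨ih fun j hj => ?_, ih fun j hj => hK j ?_⟩
    · have := hK (j + 1) (by simpa using hj)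
      rwa [Nat.cast_add_one, add_comm (j : ℤ), ← add_assoc] at this
    · exact hj.trans (by simp)

theorem nonempty_homotopy_smul_id_mappingCone (K : CochainComplex 𝒞 ℤ) (r : R) :
    Nonempty (Homotopy (r • 𝟙 (mappingCone (r • 𝟙 K))) 0) :=
  ⟨mappingCone.descHomotopy _ _ _ 0 (mappingCone.inl (r • 𝟙 K))
    (by ext p q hpq; simp [Cochain.comp_v _ _ (zero_add (-1)) p p q (by lia) (by lia)])
    (by ext p; simp)⟩

theorem nonempty_homotopy_smul_id_mappingCone_of_homotopy {K : CochainComplex 𝒞 ℤ} {s : R}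
    (h : Homotopy (s • 𝟙 K) 0) (r : R) :
    Nonempty (Homotopy (s • 𝟙 (mappingCone (r • 𝟙 K))) 0) := by
  let η : Cochain K K (-1) := Cochain.ofHomotopy h
  have hη : δ (-1) 0 η = s • Cochain.ofHom (𝟙 K) := by
    rw [δ_ofHomotopy]
    ext p
    simp
  have hinl : δ (-1) 0 (mappingCone.inl (r • 𝟙 K)) =
      r • Cochain.ofHom (mappingCone.inr (r • 𝟙 K)) := by
    ext p
    simp
  refine ⟨mappingCone.descHomotopy _ _ _ (-η.comp (mappingCone.inl (r • 𝟙 K)) (by lia))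
    (η.comp (Cochain.ofHom (mappingCone.inr (r • 𝟙 K))) (add_zero (-1))) ?_ ?_⟩
  · rw [δ_neg, δ_comp _ _ (by lia) 0 0 (-1) (by lia) (by lia) (by lia), hη, hinl]
    ext p q hpq
    simp [Cochain.comp_v _ _ (zero_add (-1)) p p q (by lia) (by lia)]
  · rw [δ_comp_ofHom, hη]
    ext p
    simp

theorem nonempty_homotopy_smul_id_koszul (K : CochainComplex 𝒞 ℤ) {r : R} {rs : List R}
    (hr : r ∈ rs) : Nonempty (Homotopy (r • 𝟙 (koszul K rs)) 0) := by
  induction rs with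
  | nil => exact absurd hr List.not_mem_nil
  | cons s rs ih =>
    rcases List.mem_cons.1 hr with rfl | hr
    · exact nonempty_homotopy_smul_id_mappingCone _ r
    · obtain ⟨h⟩ := ih hr
      exact nonempty_homotopy_smul_id_mappingCone_of_homotopy h s

end LinearCategory

theorem smul_mem_boundaries_of_homotopy {K : CochainComplex (ModuleCat.{v} R) ℤ} {r : R}
    (h : Homotopy (r • 𝟙 K) 0) {i j k : ℤ} (hij : i + 1 = j) (hjk : j + 1 = k) {x : K.X j}
    (hx : x ∈ LinearMap.ker (K.d j k).hom) : r • x ∈ LinearMap.range (K.d i j).hom := by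
  have hcomm := h.comm j
  rw [dNext_eq h.hom hjk, prevD_eq h.hom hij] at hcomm
  refine ⟨(h.hom j i).hom x, ?_⟩
  simpa [LinearMap.mem_ker.1 hx] using (ConcreteCategory.congr_hom hcomm x).symm

theorem ofList_smul_cycles_koszul_le (K : CochainComplex (ModuleCat.{v} R) ℤ) (rs : List R)
    {i j k : ℤ} (hij : i + 1 = j) (hjk : j + 1 = k) :
    Ideal.ofList rs • LinearMap.ker ((koszul K rs).d j k).hom ≤
      LinearMap.range ((koszul K rs).d i j).hom := by
  rw [Ideal.ofList, Submodule.span_smul_eq, Submodule.set_smul_le_iff]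
  intro r x hr hx
  obtain ⟨h⟩ := nonempty_homotopy_smul_id_koszul K hr
  exact smul_mem_boundaries_of_homotopy h hij hjk hx

theorem exists_ne_zero_cycle_mappingCone {K : CochainComplex (ModuleCat.{v} R) ℤ} {r : R}
    {i j k : ℤ} (hij : i + 1 = j) (hjk : j + 1 = k) {x : K.X j} (hx : x ≠ 0)
    (hdx : K.d j k x = 0) (hrx : r • x = 0) :
    ∃ z : (mappingCone (r • 𝟙 K)).X i, z ≠ 0 ∧ (mappingCone (r • 𝟙 K)).d i j z = 0 ∧
      ∀ s : R, s • x = 0 → s • z = 0 := by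
  let ι := (mappingCone.inl (r • 𝟙 K)).v j i (by lia)
  have hιfst : ι ≫ _ = 𝟙 _ := mappingCone.inl_v_fst_v (r • 𝟙 K) j i hij
  have hιd : ι ≫ _ = _ := mappingCone.inl_v_d (r • 𝟙 K) j i k (by lia) (by lia)
  refine ⟨ι x, fun hz => hx ?_, ?_, fun s hs => ?_⟩
  · simpa [hz] using (ConcreteCategory.congr_hom hιfst x).symm
  · have hrx' : r • ((mappingCone.inr (r • 𝟙 K)).f j).hom x = 0 := by
      rw [← map_smul, hrx, map_zero]
    simpa [hdx, hrx'] using ConcreteCategory.congr_hom hιd x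
  · rw [← map_smul, hs, map_zero]

theorem exists_ne_zero_cycle_koszul {K : CochainComplex (ModuleCat.{v} R) ℤ} {rs : List R} {i j : ℤ}
    (hij : i + rs.length = j) {x : K.X j} (hx : x ≠ 0) (hdx : K.d j (j + 1) x = 0)
    (hrs : ∀ r ∈ rs, r • x = 0) :
    ∃ z : (koszul K rs).X i, z ≠ 0 ∧ (koszul K rs).d i (i + 1) z = 0 ∧
      ∀ s : R, s • x = 0 → s • z = 0 := by
  induction rs generalizing i with
  | nil =>
    obtain rfl : i = j := by simpa using hij
    exact ⟨x, hx, hdx, fun _ => id⟩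
  | cons r rs ih =>
    rw [List.forall_mem_cons] at hrs
    obtain ⟨y, hy, hdy, hann⟩ := ih (i := i + 1) (by rw [← hij, List.length_cons]; lia) hrs.2
    obtain ⟨z, hz, hdz, hann'⟩ := exists_ne_zero_cycle_mappingCone rfl rfl hy hdy (hann r hrs.1)
    exact ⟨z, hz, hdz, fun s hs => hann' s (hann s hs)⟩

theorem IsResolving.koszul_X_mem {X : Set (ModuleCat.{u} R)} (hX : IsResolving R X)
    {K : CochainComplex (ModuleCat.{u} R) ℤ} (hK : ∀ i, K.X i ∈ X) (rs : List R) (i : ℤ) :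
    (koszul K rs).X i ∈ X := by
  induction rs generalizing i with
  | nil => exact hK i
  | cons r rs ih =>
    let e := HomologicalComplex.homotopyCofiber.XIsoBiprod (r • 𝟙 (koszul K rs)) i (i + 1) rfl ≪≫
      ModuleCat.biprodIsoProd _ _
    exact hX.mem_of_equiv e.toLinearEquiv.symm (hX.prod_mem (ih (i + 1)) (ih i))

theorem IsResolving.single_X_mem {X : Set (ModuleCat.{u} R)} (hX : IsResolving R X)
    {N : ModuleCat.{u} R} (hN : N ∈ X) (i : ℤ) :
    ((HomologicalComplex.single (ModuleCat.{u} R) (ComplexShape.up ℤ) 0).obj N).X i ∈ X := by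
  rcases eq_or_ne i 0 with rfl | hi
  · let e := HomologicalComplex.singleObjXSelf (ComplexShape.up ℤ) 0 N
    exact hX.mem_of_equiv e.toLinearEquiv.symm hN
  · exact hX.mem_of_isZero (HomologicalComplex.isZero_single_obj_X _ _ _ _ hi)

end Koszul

section ResidueField

variable {R}

theorem exists_ofList_eq_of_fg {I : Ideal R} (hI : I.FG) :
    ∃ rs : List R, Ideal.ofList rs = I := by
  obtain ⟨s, hs⟩ := hI
  exact ⟨s.toList, by simpa [Ideal.ofList] using hs⟩

variable {𝔪 : Ideal R} [𝔪.IsMaximal]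

theorem exists_equiv_fun_of_isTorsionBySet {A : Type*} [AddCommGroup A] [Module R A]
    [Module.Finite R A] (hA : Module.IsTorsionBySet R A 𝔪) :
    ∃ n, Nonempty (A ≃ₗ[R] (Fin n → R ⧸ 𝔪)) := by
  let := Ideal.Quotient.field 𝔪
  let := hA.module
  have : IsScalarTower R (R ⧸ 𝔪) A := hA.isScalarTower
  have : Module.Finite (R ⧸ 𝔪) A := .of_restrictScalars_finite R _ _
  exact ⟨_, ⟨(Module.finBasis (R ⧸ 𝔪) A).equivFun.restrictScalars R⟩⟩

namespace IsResolving

variable {X : Set (ModuleCat.{u} R)}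

theorem mem_of_isTorsionBySet (hX : IsResolving R X) (hk : ModuleCat.of R (R ⧸ 𝔪) ∈ X)
    {A : Type u} [AddCommGroup A] [Module R A] [Module.Finite R A]
    (hA : Module.IsTorsionBySet R A 𝔪) : ModuleCat.of R A ∈ X := by
  obtain ⟨n, ⟨e⟩⟩ := exists_equiv_fun_of_isTorsionBySet hA
  exact hX.mem_of_equiv e.symm (hX.fun_mem hk n)

theorem quotient_mem_of_isTorsionBySet (hX : IsResolving R X) {A : Type u} [AddCommGroup A]
    [Module R A] [Nontrivial A] (hAX : ModuleCat.of R A ∈ X)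
    (hA : Module.IsTorsionBySet R A 𝔪) : ModuleCat.of R (R ⧸ 𝔪) ∈ X := by
  have : Module.Finite R A := hX.fg _ hAX
  obtain ⟨n, ⟨e⟩⟩ := exists_equiv_fun_of_isTorsionBySet hA
  cases n with
  | zero => exact absurd e.injective.subsingleton (not_subsingleton A)
  | succ n =>
    exact hX.mem_of_prod_left
      (hX.mem_of_equiv (e.trans (Fin.consLinearEquiv R fun _ => R ⧸ 𝔪).symm) hAX)

variable [IsNoetherianRing R]

theorem mem_of_smul_le (hX : IsResolving R X) (hk : ModuleCat.of R (R ⧸ 𝔪) ∈ cosyzygies X)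
    {A : Type u} [AddCommGroup A] [Module R A] {S T : Submodule R A} (hST : S ≤ T)
    (hS : 𝔪 • T ≤ S) (hT : ModuleCat.of R T ∈ X) : ModuleCat.of R S ∈ X := by
  have : Module.Finite R T := hX.fg _ hT
  have htorsion : Module.IsTorsionBySet R (T ⧸ S.submoduleOf T) 𝔪 :=
    (Module.isTorsionBySet_quotient_iff _ _).2 fun x r hr =>
      hS (Submodule.smul_mem_smul hr x.2)
  have hses : IsSES (Submodule.inclusion hST) (S.submoduleOf T).mkQ :=
    ⟨Submodule.inclusion_injective hST, Submodule.mkQ_surjective _, by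
      rw [Submodule.range_inclusion, Submodule.ker_mkQ, Submodule.submoduleOf]⟩
  exact hX.mem_of_isSES_of_mem_cosyzygies hses hT
    (hX.cosyzygies.mem_of_isTorsionBySet hk htorsion)

theorem cycles_mem (hX : IsResolving R X) (hk : ModuleCat.of R (R ⧸ 𝔪) ∈ cosyzygies X)
    {K : CochainComplex (ModuleCat.{u} R) ℤ} (hK : ∀ i, K.X i ∈ X)
    (hhom : ∀ i, 𝔪 • LinearMap.ker (K.d (i + 1) (i + 1 + 1)).hom ≤
      LinearMap.range (K.d i (i + 1)).hom)
    {N : ℤ} (hN : ∀ i, N ≤ i → Limits.IsZero (K.X i)) (i : ℤ) :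
    ModuleCat.of R (LinearMap.ker (K.d i (i + 1)).hom) ∈ X := by
  obtain ⟨j, hj⟩ : ∃ j : ℕ, N ≤ i + j := ⟨(N - i).toNat, by lia⟩
  induction j generalizing i with
  | zero =>
    have := ModuleCat.subsingleton_of_isZero (hN i (by simpa using hj))
    exact hX.mem_of_projective _
  | succ j ih =>
    have hZ : ModuleCat.of R (LinearMap.ker (K.d (i + 1) (i + 1 + 1)).hom) ∈ X :=
      ih (i + 1) (by push_cast at hj; lia)
    have hle : LinearMap.range (K.d i (i + 1)).hom ≤
        LinearMap.ker (K.d (i + 1) (i + 1 + 1)).hom := by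
      rw [LinearMap.range_le_ker_iff, ← ModuleCat.hom_comp, K.d_comp_d, ModuleCat.hom_zero]
    have hB : ModuleCat.of R (LinearMap.range (K.d i (i + 1)).hom) ∈ X :=
      hX.mem_of_smul_le hk hle (hhom i) hZ
    have hses : IsSES (LinearMap.ker (K.d i (i + 1)).hom).subtype
        (K.d i (i + 1)).hom.rangeRestrict :=
      ⟨Subtype.val_injective, LinearMap.surjective_rangeRestrict _, by
        rw [Submodule.range_subtype, LinearMap.ker_rangeRestrict]⟩
    exact hX.mem_of_isSES_of_mem_cosyzygies hses (hK i) (hX.subset_cosyzygies hB)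

theorem quotient_mem_of_mem_cosyzygies (hX : IsResolving R X) {N : ModuleCat.{u} R}
    (hN : N ∈ X) {x : N} (hx : x ≠ 0) (hann : ∀ r ∈ 𝔪, r • x = 0)
    (hk : ModuleCat.of R (R ⧸ 𝔪) ∈ cosyzygies X) : ModuleCat.of R (R ⧸ 𝔪) ∈ X := by
  obtain ⟨rs, rfl⟩ := exists_ofList_eq_of_fg (Ideal.fg_of_isNoetherianRing 𝔪)
  let S := (HomologicalComplex.single (ModuleCat.{u} R) (ComplexShape.up ℤ) 0).obj N
  have hS (i : ℤ) (hi : i ≠ 0) : Limits.IsZero (S.X i) :=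
    HomologicalComplex.isZero_single_obj_X _ _ _ _ hi
  let e : N ≃ₗ[R] S.X 0 :=
    (HomologicalComplex.singleObjXSelf (ComplexShape.up ℤ) 0 N).symm.toLinearEquiv
  let i : ℤ := -rs.length
  obtain ⟨z, hz, hdz, -⟩ := exists_ne_zero_cycle_koszul (rs := rs) (i := i) (neg_add_cancel _)
    (e.map_ne_zero_iff.2 hx) (by simp [S])
    fun r hr => by rw [← map_smul, hann r (Ideal.subset_span hr), map_zero]
  have : Nontrivial (LinearMap.ker ((koszul S rs).d i (i + 1)).hom) :=
    nontrivial_of_ne ⟨z, hdz⟩ 0 fun h => hz (congrArg Subtype.val h)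
  have hZ : ModuleCat.of R (LinearMap.ker ((koszul S rs).d i (i + 1)).hom) ∈ X :=
    hX.cycles_mem hk (hX.koszul_X_mem (hX.single_X_mem hN) rs)
      (fun i => ofList_smul_cycles_koszul_le S rs rfl rfl) (N := 1)
      (fun i hi => isZero_koszul_X rs fun j _ => hS _ (by lia)) i
  refine hX.quotient_mem_of_isTorsionBySet hZ fun y r => Subtype.ext ?_
  have := ModuleCat.subsingleton_of_isZero
    (isZero_koszul_X (i := i - 1) rs fun j hj => hS _ (by lia))
  obtain ⟨w, hw⟩ := ofList_smul_cycles_koszul_le S rs (sub_add_cancel i 1) rfl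
    (Submodule.smul_mem_smul r.2 y.2)
  rw [Subsingleton.elim w 0, map_zero] at hw
  exact hw.symm

theorem quotient_mem_of_mem_cosyzygies_iterate (hX : IsResolving R X) {N : ModuleCat.{u} R}
    (hN : N ∈ X) {x : N} (hx : x ≠ 0) (hann : ∀ r ∈ 𝔪, r • x = 0) {n : ℕ}
    (hk : ModuleCat.of R (R ⧸ 𝔪) ∈ cosyzygies^[n] X) : ModuleCat.of R (R ⧸ 𝔪) ∈ X := by
  induction n with
  | zero => exact hk
  | succ n ih =>
    rw [Function.iterate_succ_apply'] at hk
    exact ih ((hX.cosyzygies_iterate n).quotient_mem_of_mem_cosyzygies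
      (hX.monotone_cosyzygies_iterate n.zero_le hN) hx hann hk)

end IsResolving

end ResidueField

section Depth

variable {R} [IsNoetherianRing R]

theorem exists_ne_zero_smul_eq_zero_of_not_isSMulRegular (I : Ideal R) (N : Type*) [AddCommGroup N]
    [Module R N] [Module.Finite R N] (h : ∀ r ∈ I, ¬ IsSMulRegular N r) :
    ∃ x : N, x ≠ 0 ∧ ∀ r ∈ I, r • x = 0 := by
  have hhom : ¬ Subsingleton (R ⧸ I →ₗ[R] N) := by
    rw [IsSMulRegular.subsingleton_linearMap_iff, Ideal.annihilator_quotient]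
    simpa using h
  obtain ⟨f, hf⟩ : ∃ f : R ⧸ I →ₗ[R] N, f ≠ 0 := by
    by_contra! h0
    exact hhom (subsingleton_of_forall_eq 0 h0)
  refine ⟨f 1, fun h1 => hf (Submodule.linearMap_qext _ (LinearMap.ext_ring h1)), fun r hr => ?_⟩
  rw [← map_smul, Algebra.smul_def, mul_one, Ideal.Quotient.algebraMap_eq,
    Ideal.Quotient.eq_zero_iff_mem.2 hr, map_zero]

theorem exists_isWeaklyRegular_of_depthE_le {I : Ideal R} {M : Type u} [AddCommGroup M]
    [Module R M] [Module.Finite R M] {t : ℕ} (h : depthE R I M ≤ t) :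
    ∃ rs : List R, RingTheory.Sequence.IsWeaklyRegular M rs ∧ rs.length ≤ t ∧
      ∃ x : M ⧸ (Ideal.ofList rs • ⊤ : Submodule R M), x ≠ 0 ∧ ∀ r ∈ I, r • x = 0 := by
  let s : Set ℕ∞ := {x | ∃ rs : List R, (∀ r ∈ rs, r ∈ I) ∧
    RingTheory.Sequence.IsWeaklyRegular M rs ∧ x = rs.length}
  have : Nonempty s := ⟨0, [], by simp, .nil R M, by simp⟩
  obtain ⟨rs, hrsI, hrs, hlen⟩ : sSup s ∈ s :=
    ENat.sSup_mem_of_nonempty_of_lt_top (h.trans_lt (ENat.natCast_lt_top t))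
  refine ⟨rs, hrs, by exact_mod_cast hlen.symm.trans_le h, ?_⟩
  refine exists_ne_zero_smul_eq_zero_of_not_isSMulRegular I _ fun r hr hreg => ?_
  have hmem : (((rs ++ [r]).length : ℕ) : ℕ∞) ∈ s := by
    refine ⟨rs ++ [r], by simpa [or_imp, forall_and, hr] using hrsI, ?_, rfl⟩
    rw [RingTheory.Sequence.isWeaklyRegular_append_iff,
      RingTheory.Sequence.isWeaklyRegular_singleton_iff]
    exact ⟨hrs, hreg⟩
  have hle : (rs ++ [r]).length ≤ rs.length := by exact_mod_cast (le_sSup hmem).trans_eq hlen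
  simp at hle

open scoped Pointwise in
theorem IsResolving.quotSMulTop_mem_cosyzygies {X : Set (ModuleCat.{u} R)} (hX : IsResolving R X)
    {M : Type u} [AddCommGroup M] [Module R M] (hM : ModuleCat.of R M ∈ X) {r : R}
    (hr : IsSMulRegular M r) : ModuleCat.of R (QuotSMulTop r M) ∈ cosyzygies X := by
  have hses : IsSES (LinearMap.lsmul R M r) (r • ⊤ : Submodule R M).mkQ := by
    refine ⟨hr, Submodule.mkQ_surjective _, ?_⟩
    ext x
    simp [Submodule.mem_smul_pointwise_iff_exists]
  exact hX.mem_cosyzygies_of_isSES hses hM (hX.subset_cosyzygies hM)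

theorem IsResolving.quotient_ofList_smul_mem_cosyzygies_iterate {X : Set (ModuleCat.{u} R)}
    (hX : IsResolving R X) {M : Type u} [AddCommGroup M] [Module R M]
    (hM : ModuleCat.of R M ∈ X) {rs : List R} (hrs : RingTheory.Sequence.IsWeaklyRegular M rs) :
    ModuleCat.of R (M ⧸ (Ideal.ofList rs • ⊤ : Submodule R M)) ∈ cosyzygies^[rs.length] X := by
  induction rs generalizing M X with
  | nil => exact hX.mem_of_equiv (Submodule.quotEquivOfEqBot _ (by simp)).symm hM
  | cons r rs ih =>
    rw [RingTheory.Sequence.isWeaklyRegular_cons_iff] at hrs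
    exact (hX.cosyzygies_iterate _).mem_of_equiv
      (Submodule.quotOfListConsSMulTopEquivQuotSMulTopInner M r rs).symm
      (ih hX.cosyzygies (hX.quotSMulTop_mem_cosyzygies hM hrs.1) hrs.2)

end Depth

variable {R} in
theorem IsMinSyz.isSyz [IsLocalRing R] {n : ℕ} {M K : ModuleCat.{u} R}
    (h : IsMinSyz R n M K) : IsSyz R n M K := by
  induction n generalizing M with
  | zero => exact h
  | succ n ih =>
    obtain ⟨F, g, K', i, hfin, hfree, hg, -, hi, hexact, hK'⟩ := h
    exact ⟨F, g, K', i, hfin, inferInstance, hg, hi, hexact, ih hK'⟩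

theorem syzygy_mem_resClosure_general [IsNoetherianRing R] (𝔪 : Ideal R) [𝔪.IsMaximal]
    (M : ModuleCat.{u} R) (hfg : Module.Finite R M) (t : ℕ) (ht : depthE R 𝔪 M ≤ t)
    (n : ℕ) (K Kt : ModuleCat.{u} R)
    (hK : IsSyz R n (ModuleCat.of R (R ⧸ 𝔪)) K) (hKt : IsSyz R t (ModuleCat.of R (R ⧸ 𝔪)) Kt) :
    Kt ∈ resClosure R {ModuleCat.of R (↥M × ↥K)} := by
  refine Set.mem_sInter.2 fun X ⟨hX, hMKX⟩ => ?_
  rw [Set.singleton_subset_iff] at hMKX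
  obtain ⟨rs, hrs, hlen, x, hx, hann⟩ := exists_isWeaklyRegular_of_depthE_le ht
  let Y : Set (ModuleCat.{u} R) := cosyzygies^[rs.length] X
  have hMrs : ModuleCat.of R (M ⧸ (Ideal.ofList rs • ⊤ : Submodule R M)) ∈ Y :=
    hX.quotient_ofList_smul_mem_cosyzygies_iterate (hX.mem_of_prod_left hMKX) hrs
  have hkn : ModuleCat.of R (R ⧸ 𝔪) ∈ cosyzygies^[n] Y := by
    rw [← Function.iterate_add_apply]
    exact hX.monotone_cosyzygies_iterate (Nat.le_add_right n _)
      ((hX.mem_cosyzygies_iterate_iff_of_isSyz hK).2 (hX.mem_of_prod_right hMKX))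
  have hk : ModuleCat.of R (R ⧸ 𝔪) ∈ Y :=
    (hX.cosyzygies_iterate _).quotient_mem_of_mem_cosyzygies_iterate hMrs hx hann hkn
  exact (hX.mem_cosyzygies_iterate_iff_of_isSyz hKt).1 (hX.monotone_cosyzygies_iterate hlen hk)

/-- Proposition: over a `d`-dimensional Cohen-Macaulay local ring, if `M` is a nonzero
module of depth `t`, then `Ω^t k ∈ res (M ⊕ Ω^n k)` for every `n ≥ 0`. -/
theorem syzygy_mem_resClosure [IsNoetherianRing R] [IsLocalRing R]
    (hCM : IsCMLocalRing R) (d : ℕ) (hd : ringKrullDim R = (d : WithBot ℕ∞))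
    (M : ModuleCat.{u} R) (hfg : Module.Finite R M) (hM : Nontrivial M)
    (t : ℕ) (ht : depthE R (IsLocalRing.maximalIdeal R) M = (t : ℕ∞))
    (n : ℕ) (K Kt : ModuleCat.{u} R)
    (hK : IsMinSyz R n (residueMod R) K) (hKt : IsMinSyz R t (residueMod R) Kt) :
    Kt ∈ resClosure R {ModuleCat.of R (↥M × ↥K)} :=
  syzygy_mem_resClosure_general R (IsLocalRing.maximalIdeal R) M hfg t ht.le n K Kt
    hK.isSyz hKt.isSyz

end ResolvPaper
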